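/- arXiv:1911.08441 — 2 statements merged into one kernel-verified Lean document; each statement's English description precedes it below -/
import Mathlib

section
/- Let L_{j,i} ∈ R = K[x_0, x_1, …, x_n] (1 ≤ j ≤ n, 1 ≤ i ≤ ℓ_j, n ≥ 2) be linear forms satisfying condition (α), set f_j = ∏_{i=1}^{ℓ_j} L_{j,i} and I = (f_i f_j : 1 ≤ i < j ≤ n), and let Ω = (x_i^{ℓ_i} x_j^{ℓ_j} : 1 ≤ i < j ≤ n) ⊆ S = K[x_1, …, x_n]. Then for every h ≥ 0, dim_K Tor_h^R(R/I, R/(x_0, x_1, …, x_n)) = dim_K Tor_h^S(S/Ω, S/(x_1, …, x_n)); that is, the graded Betti numbers of a complete grid or pseudo-grid of lines coincide with those of the monomial ideal Ω. -/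
open CategoryTheory MvPolynomial

/-- The dimension over `K` of (the carrier of) a module `M` over a `K`-algebra `R`. -/
noncomputable def kdim (K R : Type) [Field K] [CommRing R] [Algebra K R]
    (M : ModuleCat R) : Cardinal :=
  @Module.rank K M _ _ (Module.compHom M (algebraMap K R))

/-- `dim_K Tor_h^T(T/N, T/𝔪_T)` for `T = K[x_0,…,x_{m-1}]` with irrelevant maximal ideal
`𝔪_T`. -/
noncomputable def torBetti (K : Type) [Field K] (m : ℕ)
    (N : Ideal (MvPolynomial (Fin m) K)) (h : ℕ) : Cardinal :=
  kdim K (MvPolynomial (Fin m) K)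
    (((Tor (ModuleCat (MvPolynomial (Fin m) K)) h).obj
        (ModuleCat.of _ (MvPolynomial (Fin m) K ⧸ N))).obj
      (ModuleCat.of _ (MvPolynomial (Fin m) K ⧸
        Ideal.span (Set.range (X : Fin m → MvPolynomial (Fin m) K)))))

/-!
Independent linear forms form a regular sequence, and if `a, r₁, …` and `b, r₁, …` are regular on
`M`, so is `ab, r₁, …`, by the exact sequence `0 → M/bM → M/abM → M/aM → 0`. Condition (α)
therefore makes `f₁, …, fₙ` a regular sequence of homogeneous polynomials. Let `A = K[y₁, …, yₙ]`
act on `R` by `y_j ↦ f_j`, and choose monomials of `R` mapping to a `K`-basis of `R/(f₁, …, fₙ)`.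
They span `R` over `A` by the graded Nakayama lemma and are independent because `f` is regular,
so `R` is free over `A`. A projective resolution of `K` over `R` is then one over `A`, whence
`Tor^R(R/JR, K) = Tor^A(A/J, K)` for every ideal `J` of `A`. For `J = (y_i y_j : i < j)` the right
side does not depend on `f`, and the choice `f_j = x_j ^ ℓ_j` in `S` gives `Ω`.
-/

section WeaklyRegular

open RingTheory.Sequence
open scoped Pointwise

variable {R : Type*} [CommRing R]

theorem isWeaklyRegular_of_exact {M₁ M₂ M₃ : Type*} [AddCommGroup M₁] [AddCommGroup M₂]
    [AddCommGroup M₃] [Module R M₁] [Module R M₂] [Module R M₃] {f : M₁ →ₗ[R] M₂}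
    {g : M₂ →ₗ[R] M₃} (hf : Function.Injective f) (hfg : Function.Exact f g)
    (hg : Function.Surjective g) {rs : List R} (h₁ : IsWeaklyRegular M₁ rs)
    (h₃ : IsWeaklyRegular M₃ rs) : IsWeaklyRegular M₂ rs := by
  induction rs generalizing M₁ M₂ M₃ with
  | nil => exact .nil R M₂
  | cons r rs ih =>
    rw [isWeaklyRegular_cons_iff] at h₁ h₃
    refine .cons (isSMulRegular_of_range_eq_ker hf hfg.linearMap_ker_eq.symm h₁.1 h₃.1)
      (ih ?_ (QuotSMulTop.map_exact r hfg hg) (QuotSMulTop.map_surjective r hg) h₁.2 h₃.2)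
    have exact_zero : Function.Exact (0 : PUnit →ₗ[R] M₁) f :=
      LinearMap.exact_zero_iff_injective _ _ |>.2 hf
    have exact_map :=
      QuotSMulTop.map_first_exact_on_four_term_exact_of_isSMulRegular_last exact_zero hfg h₃.1
    rw [map_zero] at exact_map
    exact (LinearMap.exact_zero_iff_injective _ _).1 exact_map

variable {M : Type*} [AddCommGroup M] [Module R M]

theorem isWeaklyRegular_mul_cons {a b : R} {rs : List R} (ha : IsWeaklyRegular M (a :: rs))
    (hb : IsWeaklyRegular M (b :: rs)) : IsWeaklyRegular M (a * b :: rs) := by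
  rw [isWeaklyRegular_cons_iff] at ha hb
  have smul_mem_iff (x : M) :
      a • x ∈ (a * b) • (⊤ : Submodule R M) ↔ x ∈ b • (⊤ : Submodule R M) := by
    rw [mul_smul]
    exact ⟨fun ⟨_, hy, hxy⟩ => ha.1 hxy ▸ hy, Submodule.smul_mem_pointwise_smul _ _ _⟩
  let f : QuotSMulTop b M →ₗ[R] QuotSMulTop (a * b) M :=
    Submodule.mapQ _ _ (LinearMap.lsmul R M a) fun x => (smul_mem_iff x).2
  have le : (a * b) • (⊤ : Submodule R M) ≤ a • ⊤ := by
    rw [mul_smul]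
    exact smul_mono_right a le_top
  let g : QuotSMulTop (a * b) M →ₗ[R] QuotSMulTop a M := Submodule.factor le
  have f_injective : Function.Injective f :=
    (injective_iff_map_eq_zero f).2 <| (Submodule.mkQ_surjective _).forall.2 fun x hx =>
      (Submodule.Quotient.mk_eq_zero _).2 <|
        (smul_mem_iff x).1 <| (Submodule.Quotient.mk_eq_zero _).1 hx
  have exact_fg : Function.Exact f g := by
    refine (Submodule.mkQ_surjective _).forall.2 fun x => ⟨fun hx => ?_, ?_⟩
    · obtain ⟨y, -, rfl⟩ := (Submodule.Quotient.mk_eq_zero _).1 hx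
      exact ⟨Submodule.Quotient.mk y, rfl⟩
    · rintro ⟨y, hy⟩
      obtain ⟨y, rfl⟩ := Submodule.mkQ_surjective _ y
      rw [← hy]
      exact (Submodule.Quotient.mk_eq_zero _).2 (Submodule.smul_mem_pointwise_smul _ _ _ trivial)
  exact .cons (ha.1.mul hb.1)
    (isWeaklyRegular_of_exact f_injective exact_fg (Submodule.factor_surjective le) hb.2 ha.2)

theorem isWeaklyRegular_ofFn_prod {n : ℕ} {ι : Fin n → Type*} [∀ j, Fintype (ι j)]
    [∀ j, Nonempty (ι j)] {r : ∀ j, ι j → R}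
    (h : ∀ c : ∀ j, ι j, IsWeaklyRegular M (List.ofFn fun j => r j (c j))) :
    IsWeaklyRegular M (List.ofFn fun j => ∏ i, r j i) := by
  induction n generalizing M with
  | zero => exact .nil R M
  | succ n ih =>
    rw [List.ofFn_succ]
    refine Finset.prod_induction_nonempty (r 0) (fun a => IsWeaklyRegular M (a :: _))
      (fun _ _ => isWeaklyRegular_mul_cons) Finset.univ_nonempty fun i _ => ?_
    have h' (c : ∀ j : Fin n, ι j.succ) := by
      simpa [List.ofFn_succ] using h (Fin.cons i c)
    exact .cons (h' fun _ => Classical.arbitrary _).1 (ih fun c => (h' c).2)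

end WeaklyRegular

section LinearForms

open RingTheory.Sequence

theorem isWeaklyRegular_map_X {R σ : Type*} [CommRing R] {vs : List σ} (h : vs.Nodup) :
    IsWeaklyRegular (MvPolynomial σ R) (vs.map (X (R := R))) := by
  have ofList_eq (l : List σ) :
      Ideal.ofList (l.map (X (R := R))) = Ideal.span (X '' {s | s ∈ l}) :=
    congrArg Ideal.span (Set.ext fun p => by simp)
  refine ⟨fun i hi => ?_⟩
  rw [List.length_map] at hi
  rw [isSMulRegular_quotient_iff_mem_of_smul_mem, List.getElem_map, ← List.map_take, smul_eq_mul,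
    Ideal.mul_top, ofList_eq]
  intro p hp
  rw [smul_eq_mul] at hp
  rw [mem_ideal_span_X_image] at hp ⊢
  intro m hm
  obtain ⟨s, hs, hne⟩ := hp (Finsupp.single vs[i] 1 + m) (by simpa [coeff_X_mul] using hm)
  have ne : vs[i] ≠ s := by
    rintro rfl
    obtain ⟨k, hk, hki⟩ := List.mem_take_iff_getElem.1 hs
    have := h.getElem_inj_iff.1 hki
    omega
  exact ⟨s, hs, by simpa [Finsupp.single_apply, ne] using hne⟩

universe u v w

variable {K : Type u} {σ : Type v} [Field K]

theorem exists_algEquiv_apply_X_eq {ι : Type w} {L : ι → MvPolynomial σ K}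
    (hom : ∀ j, (L j).IsHomogeneous 1) (ind : LinearIndependent K L) :
    ∃ (τ : Type (max u v)) (v : ι → τ) (φ : MvPolynomial τ K ≃ₐ[K] MvPolynomial σ K),
      Function.Injective v ∧ ∀ j, φ (X (v j)) = L j := by
  let V := Submodule.span K (Set.range (X : σ → MvPolynomial σ K))
  let b : Module.Basis σ K V := .span (linearIndependent_X σ K)
  have mem_V (j : ι) : L j ∈ V := by
    change _ ∈ Submodule.span _ _
    rw [← homogeneousSubmodule_one_eq_span_X]
    exact hom j
  let L' (j : ι) : V := ⟨L j, mem_V j⟩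
  have ind' : LinearIndependent K L' := .of_comp V.subtype ind
  let b' := Module.Basis.extend ind'.linearIndepOn_id
  let v (j : ι) : ind'.linearIndepOn_id.extend (Set.subset_univ _) :=
    ⟨L' j, ind'.linearIndepOn_id.subset_extend _ ⟨j, rfl⟩⟩
  refine ⟨_, v, (SymmetricAlgebra.equivMvPolynomial b').symm.trans
    (SymmetricAlgebra.equivMvPolynomial b), fun i j h => ind'.injective (congrArg Subtype.val h),
    fun j => ?_⟩
  have equiv_comp_ι : (SymmetricAlgebra.equivMvPolynomial b).toLinearMap ∘ₗ
      SymmetricAlgebra.ι K V = V.subtype :=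
    b.ext fun i => by
      have b_apply : (b i : MvPolynomial σ K) = X i :=
        congrArg Subtype.val (Module.Basis.span_apply _ i)
      simp [b_apply]
  have := LinearMap.congr_fun equiv_comp_ι (L' j)
  simpa [b', v] using this

theorem isWeaklyRegular_ofFn_of_linearIndependent {n : ℕ} {L : Fin n → MvPolynomial σ K}
    (hom : ∀ j, (L j).IsHomogeneous 1) (ind : LinearIndependent K L) :
    IsWeaklyRegular (MvPolynomial σ K) (List.ofFn L) := by
  obtain ⟨τ, v, φ, hv, hφ⟩ := exists_algEquiv_apply_X_eq hom ind
  have regular := isWeaklyRegular_map_X (R := K) (List.nodup_ofFn.2 hv)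
  have := (φ.toAddEquiv.isWeaklyRegular_congr (as := List.map X (List.ofFn v)) (bs := .map φ _)
    (List.forall₂_map_right_iff.2 (List.forall₂_same.2 fun p _ => map_mul φ p))).1 regular
  simpa [List.map_ofFn, Function.comp_def, hφ] using this

end LinearForms

section LinearIndependence

open RingTheory.Sequence
open scoped Pointwise

variable {K R M ι : Type*} [CommRing K] [CommRing R] [Algebra K R] [AddCommGroup M] [Module K M]
  [Module R M] [IsScalarTower K R M]

theorem linearIndependent_pow_smul {a : R} (ha : IsSMulRegular M a) {v : ι → M}
    (hv : LinearIndependent K fun i => (Submodule.Quotient.mk (v i) : QuotSMulTop a M)) :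
    LinearIndependent K fun x : ℕ × ι => a ^ x.1 • v x.2 := by
  have eq_zero (N : ℕ) (c : ℕ → ι →₀ K)
      (h : ∑ k ∈ Finset.range N, a ^ k • Finsupp.linearCombination K v (c k) = 0) :
      ∀ k < N, c k = 0 := by
    induction N generalizing c with
    | zero => simp
    | succ N ih =>
      simp only [Finset.sum_range_succ', pow_succ', mul_smul, ← Finset.smul_sum, pow_zero,
        one_smul] at h
      have c_zero : c 0 = 0 := by
        refine linearIndependent_iff.1 hv _ ?_
        have : (Submodule.mkQ (a • (⊤ : Submodule R M))).restrictScalars K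
            (Finsupp.linearCombination K v (c 0)) = 0 := by
          refine (Submodule.Quotient.mk_eq_zero _).2 ?_
          rw [eq_neg_of_add_eq_zero_right h]
          exact neg_mem (Submodule.smul_mem_pointwise_smul _ _ _ trivial)
        rwa [Finsupp.apply_linearCombination] at this
      rw [c_zero, map_zero, add_zero] at h
      have c_succ := ih (fun k => c (k + 1)) (ha.right_eq_zero_of_smul h)
      rintro (_ | k) hk
      · exact c_zero
      · exact c_succ k (by omega)
  rw [linearIndependent_iff]
  intro c hc
  obtain ⟨N, hN⟩ := c.curry.support.exists_nat_subset_range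
  have sum_eq : ∑ k ∈ Finset.range N, a ^ k • Finsupp.linearCombination K v (c.curry k) = 0 := by
    rw [← hc, Finsupp.linearCombination_apply, ← Finsupp.sum_curry_index c
      (fun k i r => r • a ^ k • v i),
      Finsupp.sum_of_support_subset _ hN _ fun _ _ => Finsupp.sum_zero_index]
    simp only [Finsupp.linearCombination_apply, Finsupp.smul_sum, smul_comm (a ^ _)]
  have : c.curry = 0 := by
    ext k : 1
    by_cases hk : k < N
    · exact eq_zero N _ sum_eq k hk
    · exact Finsupp.notMem_support_iff.1 fun h => hk (Finset.mem_range.1 (hN h))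
  exact (Finsupp.curryEquiv).injective this

theorem linearIndependent_prod_pow_smul {n : ℕ} {f : Fin n → R}
    (hf : IsWeaklyRegular M (List.ofFn f)) {v : ι → M}
    (hv : LinearIndependent K fun i =>
      (Submodule.Quotient.mk (v i) : M ⧸ Ideal.ofList (List.ofFn f) • (⊤ : Submodule R M))) :
    LinearIndependent K fun x : (Fin n → ℕ) × ι => (∏ j, f j ^ x.1 j) • v x.2 := by
  induction n generalizing M with
  | zero =>
    have indep : LinearIndependent K v := .of_comp ((Submodule.mkQ _).restrictScalars K) hv
    simpa [Function.comp_def] using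
      indep.comp (Prod.snd : (Fin 0 → ℕ) × ι → ι) (Prod.snd_injective)
  | succ n ih =>
    rw [List.ofFn_succ] at hf hv
    rw [isWeaklyRegular_cons_iff] at hf
    let e := (Submodule.quotOfListConsSMulTopEquivQuotSMulTopInner M (f 0)
      (List.ofFn fun j => f j.succ)).restrictScalars K
    have indep_quot := ih hf.2 (v := fun i => Submodule.Quotient.mk (v i))
      (hv.map' e.toLinearMap e.ker)
    have indep := (linearIndependent_pow_smul hf.1 (v := fun x : (Fin n → ℕ) × ι =>
      (∏ j, f j.succ ^ x.1 j) • v x.2) indep_quot).comp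
      (fun x : (Fin (n + 1) → ℕ) × ι => (x.1 0, (Fin.tail x.1, x.2))) (by
        rintro ⟨s, i⟩ ⟨t, j⟩ h
        simp only [Prod.mk.injEq] at h
        rw [← Fin.cons_self_tail s, ← Fin.cons_self_tail t, h.1, h.2.1, h.2.2])
    simpa [Function.comp_def, Fin.prod_univ_succ, Fin.tail, mul_smul] using indep

end LinearIndependence

theorem linearIndependent_of_basis_smul {K A M κ ι : Type*} [Semiring K] [Semiring A]
    [AddCommMonoid M] [Module K A] [Module A M] [Module K M] [IsScalarTower K A M]
    (b : Module.Basis κ K A) {v : ι → M}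
    (h : LinearIndependent K fun x : κ × ι => b x.1 • v x.2) : LinearIndependent A v := by
  rw [← linearIndependent_equiv' (.prodComm ..) (g := fun x : ι × κ => b x.2 • v x.1) rfl,
    LinearIndependent, Finsupp.linearCombination_smul] at h
  refine Function.Injective.of_comp_right (by simpa using! h) ?_
  refine (Finsupp.mapRange_surjective _ (map_zero _) fun a => ?_).comp (Equiv.surjective _)
  exact ⟨b.repr a, b.linearCombination_repr a⟩

universe u in
theorem exists_linearIndependent_mk_and_span_sup_eq_top {K M : Type*} {ι : Type u} [DivisionRing K]
    [AddCommGroup M] [Module K M] {v : ι → M} (hv : Submodule.span K (Set.range v) = ⊤)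
    (N : Submodule K M) :
    ∃ (κ : Type u) (a : κ → ι), LinearIndependent K (N.mkQ ∘ v ∘ a) ∧
      Submodule.span K (Set.range (v ∘ a)) ⊔ N = ⊤ := by
  obtain ⟨κ, a, -, span_eq, indep⟩ := exists_linearIndependent' K (N.mkQ ∘ v)
  refine ⟨κ, a, indep, ?_⟩
  rw [sup_comm, ← Submodule.map_mkQ_eq_top, Submodule.map_span, ← Set.range_comp,
    ← Function.comp_assoc, span_eq, Set.range_comp, ← Submodule.map_span, hv, Submodule.map_top,
    Submodule.range_mkQ]

section GradedNakayama

variable {K σ ι : Type*} [CommRing K]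

theorem homogeneousComponent_mul_of_isHomogeneous {p : MvPolynomial σ K} {d : ℕ}
    (hp : p.IsHomogeneous d) (q : MvPolynomial σ K) (i : ℕ) :
    homogeneousComponent i (q * p) =
      if d ≤ i then homogeneousComponent (i - d) q * p else 0 := by
  let := gradedAlgebra (σ := σ) (R := K)
  simp only [← decomposition.decompose'_apply]
  exact DirectSum.coe_decompose_mul_of_right_mem (homogeneousSubmodule σ K) i hp

theorem homogeneousComponent_mem_span_range {v : ι → MvPolynomial σ K} {d : ι → ℕ}
    (hom : ∀ j, (v j).IsHomogeneous (d j)) {p : MvPolynomial σ K}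
    (hp : p ∈ Submodule.span K (Set.range v)) (i : ℕ) :
    homogeneousComponent i p ∈ Submodule.span K (Set.range v) := by
  have map_le : (Submodule.span K (Set.range v)).map (homogeneousComponent i) ≤
      Submodule.span K (Set.range v) := by
    rw [Submodule.map_span_le, Set.forall_mem_range]
    intro j
    rw [homogeneousComponent_of_mem (hom j)]
    split_ifs
    · exact Submodule.subset_span ⟨j, rfl⟩
    · exact zero_mem _
  exact map_le ⟨p, hp, rfl⟩

theorem eq_top_of_sup_span_range_eq_top {f : ι → MvPolynomial σ K} {d : ι → ℕ}
    (hd : ∀ j, 0 < d j) (hom : ∀ j, (f j).IsHomogeneous (d j))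
    {E T : Submodule K (MvPolynomial σ K)}
    (hE : ∀ p ∈ E, ∀ i, homogeneousComponent i p ∈ E) (hET : E ≤ T)
    (hT : ∀ j, ∀ p ∈ T, p * f j ∈ T)
    (h : E ⊔ (Ideal.span (Set.range f)).restrictScalars K = ⊤) : T = ⊤ := by
  suffices mem_T : ∀ i, ∀ p : MvPolynomial σ K, p.IsHomogeneous i → p ∈ T by
    refine eq_top_iff.2 fun p _ => ?_
    rw [← sum_homogeneousComponent p]
    exact sum_mem fun i _ => mem_T i _ (homogeneousComponent_isHomogeneous i p)
  intro i
  induction i using Nat.strong_induction_on with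
  | _ i ih =>
    intro p hp
    obtain ⟨q, hq, r, hr, rfl⟩ := Submodule.mem_sup.1 (h ▸ Submodule.mem_top : p ∈ _)
    obtain ⟨c, rfl⟩ := Finsupp.mem_ideal_span_range_iff_exists_finsupp.1 hr
    rw [← homogeneousComponent_eq_self hp, map_add, map_finsuppSum]
    refine add_mem (hET (hE q hq i)) (sum_mem fun j _ => ?_)
    simp only [homogeneousComponent_mul_of_isHomogeneous (hom j)]
    split_ifs with hij
    · exact hT j _ (ih _ (Nat.sub_lt_of_pos_le (hd j) hij) _
        (homogeneousComponent_isHomogeneous _ _))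
    · exact zero_mem _

end GradedNakayama

section Freeness

open RingTheory.Sequence

variable {K σ : Type*} [Field K] {n : ℕ} [Algebra (MvPolynomial (Fin n) K) (MvPolynomial σ K)]
  [IsScalarTower K (MvPolynomial (Fin n) K) (MvPolynomial σ K)]

theorem free_of_isWeaklyRegular {f : Fin n → MvPolynomial σ K} {d : Fin n → ℕ}
    (hd : ∀ j, 0 < d j) (hom : ∀ j, (f j).IsHomogeneous (d j))
    (regular : IsWeaklyRegular (MvPolynomial σ K) (List.ofFn f))
    (algebraMap_X : ∀ j, algebraMap (MvPolynomial (Fin n) K) (MvPolynomial σ K) (X j) = f j) :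
    Module.Free (MvPolynomial (Fin n) K) (MvPolynomial σ K) := by
  let N : Submodule (MvPolynomial σ K) (MvPolynomial σ K) := Ideal.ofList (List.ofFn f) • ⊤
  have N_eq : N = Ideal.span (Set.range f) := by
    simp [N, Ideal.ofList, List.mem_ofFn', Set.range]
  obtain ⟨κ, a, indep_mk, span_sup⟩ := exists_linearIndependent_mk_and_span_sup_eq_top
    (basisMonomials σ K).span_eq (N.restrictScalars K)
  let v := basisMonomials σ K ∘ a
  have monomial_smul (s : Fin n →₀ ℕ) (p : MvPolynomial σ K) :
      basisMonomials (Fin n) K s • p = (∏ j, f j ^ s j) • p := by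
    simp [Algebra.smul_def, monomial_eq, Finsupp.prod_fintype, algebraMap_X]
  have indep : LinearIndependent (MvPolynomial (Fin n) K) v := by
    refine linearIndependent_of_basis_smul (basisMonomials (Fin n) K) ?_
    simp only [monomial_smul]
    exact (linearIndependent_prod_pow_smul regular indep_mk).comp
      (Prod.map (fun s : Fin n →₀ ℕ => ⇑s) id)
      (DFunLike.coe_injective.prodMap Function.injective_id)
  let T := Submodule.span (MvPolynomial (Fin n) K) (Set.range v)
  have T_eq_top : T.restrictScalars K = ⊤ := by
    have v_hom (k : κ) : (v k).IsHomogeneous (a k).degree := by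
      simpa [v] using isHomogeneous_monomial (R := K) 1 (rfl : (a k).degree = _)
    refine eq_top_of_sup_span_range_eq_top hd hom
      (fun p => homogeneousComponent_mem_span_range v_hom) (Submodule.span_le_restrictScalars _ _ _)
      (fun j p hp => ?_) (N_eq ▸ span_sup)
    have smul_mem := T.smul_mem (X j) hp
    rwa [Algebra.smul_def, algebraMap_X, mul_comm] at smul_mem
  exact .of_basis (.mk indep ((Submodule.restrictScalars_eq_top_iff _ _ _).1 T_eq_top).ge)

end Freeness

section LeftDerived

variable {C C₁ D D₁ : Type*} [Category* C] [Category* C₁] [Category* D] [Category* D₁] [Abelian C]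
  [HasProjectiveResolutions C] [Abelian C₁] [Abelian D] [HasProjectiveResolutions D] [Abelian D₁]

/-- Left derived functors commute with a square of functors `H ⋙ Ψ ≅ Φ ⋙ G` in which `Φ` and `Ψ`
are exact and `Φ` preserves projective objects. -/
noncomputable def leftDerivedObjIsoOfCompIso (Φ : C ⥤ D) (Ψ : C₁ ⥤ D₁) (H : C ⥤ C₁) (G : D ⥤ D₁)
    [Φ.Additive] [Ψ.Additive] [H.Additive] [G.Additive] [Φ.PreservesHomology]
    [Ψ.PreservesHomology] [Φ.PreservesProjectiveObjects] (e : H ⋙ Ψ ≅ Φ ⋙ G) (N : C) (h : ℕ) :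
    Ψ.obj ((H.leftDerived h).obj N) ≅ (G.leftDerived h).obj (Φ.obj N) :=
  let P := projectiveResolution N
  let HP := (H.mapHomologicalComplex (ComplexShape.down ℕ)).obj P.complex
  Ψ.mapIso (P.isoLeftDerivedObj H h) ≪≫ ((HP.sc h).mapHomologyIso Ψ).symm ≪≫
    (HomologicalComplex.homologyFunctor D₁ _ h).mapIso
      ((NatIso.mapHomologicalComplex e (ComplexShape.down ℕ)).app P.complex) ≪≫
    ((Φ.mapProjectiveResolution P).isoLeftDerivedObj G h).symm

end LeftDerived

section RestrictScalars

open MonoidalCategory TensorProduct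

theorem projective_of_projective_algebra {A R M : Type*} [CommSemiring A] [Semiring R]
    [Algebra A R] [AddCommMonoid M] [Module A M] [Module R M] [IsScalarTower A R M]
    [Module.Projective A R] [Module.Projective R M] : Module.Projective A M := by
  classical
  obtain ⟨s, hs⟩ := Module.projective_def.1 ‹Module.Projective R M›
  have : Module.Projective A (M →₀ R) := .of_equiv (finsuppLequivDFinsupp (ι := M) (M := R) A).symm
  exact .of_split (s.restrictScalars A) ((Finsupp.linearCombination R id).restrictScalars A)
    (LinearMap.ext hs)

/-- The isomorphism `(R ⊗[A] M) ⊗[R] P ≃ M ⊗[A] P`, sending `(r ⊗ m) ⊗ p` to `m ⊗ r • p`. -/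
noncomputable def baseChangeTensorEquiv (A R M P : Type*) [CommRing A] [CommRing R] [Algebra A R]
    [AddCommGroup M] [Module A M] [AddCommGroup P] [Module A P] [Module R P] [IsScalarTower A R P] :
    (R ⊗[A] M) ⊗[R] P ≃ₗ[A] M ⊗[A] P :=
  (TensorProduct.comm R (R ⊗[A] M) P).restrictScalars A ≪≫ₗ
    (AlgebraTensorModule.cancelBaseChange A R R P M).restrictScalars A ≪≫ₗ
    TensorProduct.comm A P M

theorem baseChangeTensorEquiv_lTensor {A R M P Q : Type*} [CommRing A] [CommRing R] [Algebra A R]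
    [AddCommGroup M] [Module A M] [AddCommGroup P] [Module A P] [Module R P] [IsScalarTower A R P]
    [AddCommGroup Q] [Module A Q] [Module R Q] [IsScalarTower A R Q] (g : P →ₗ[R] Q)
    (x : (R ⊗[A] M) ⊗[R] P) :
    baseChangeTensorEquiv A R M Q (g.lTensor (R ⊗[A] M) x) =
      (g.restrictScalars A).lTensor M (baseChangeTensorEquiv A R M P x) := by
  induction x using TensorProduct.induction_on with
  | zero => simp
  | add x y hx hy => simp only [map_add, hx, hy]
  | tmul y p =>
    induction y using TensorProduct.induction_on with
    | zero => simp
    | add y z hy hz => simp only [TensorProduct.add_tmul, map_add, hy, hz]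
    | tmul r m => simp [baseChangeTensorEquiv]

universe u

variable {A R : Type u} [CommRing A] [CommRing R] [Algebra A R]

instance restrictScalars_preservesProjectiveObjects [Module.Projective A R] :
    (ModuleCat.restrictScalars.{u} (algebraMap A R)).PreservesProjectiveObjects where
  projective_obj {P} _ := by
    have : Module.Projective R P := ModuleCat.projective_of_module_projective P
    let := Module.compHom P (algebraMap A R)
    have : IsScalarTower A R P := .of_compHom A R P
    have : Module.Projective A P := projective_of_projective_algebra (R := R)
    exact ModuleCat.projective_of_categoryTheory_projective (ModuleCat.of A P)

/-- Over `A`, tensoring with `R ⊗[A] M` over `R` is tensoring with `M` over `A`. -/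
noncomputable def tensoringLeftBaseChangeIso (M : Type u) [AddCommGroup M] [Module A M] :
    (tensoringLeft (ModuleCat.{u} R)).obj (ModuleCat.of R (R ⊗[A] M)) ⋙
        ModuleCat.restrictScalars.{u} (algebraMap A R) ≅
      ModuleCat.restrictScalars.{u} (algebraMap A R) ⋙
        (tensoringLeft (ModuleCat.{u} A)).obj (ModuleCat.of A M) :=
  NatIso.ofComponents (fun P =>
    letI := Module.compHom P (algebraMap A R)
    haveI : IsScalarTower A R P := .of_compHom A R P
    let e : (ModuleCat.restrictScalars (algebraMap A R)).obj (ModuleCat.of R (R ⊗[A] M) ⊗ P) ≃ₗ[A]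
        (ModuleCat.of A M ⊗ (ModuleCat.restrictScalars (algebraMap A R)).obj P : ModuleCat A) :=
      { baseChangeTensorEquiv A R M P with
        map_smul' a (x : (R ⊗[A] M) ⊗[R] P) :=
          (congrArg (baseChangeTensorEquiv A R M P) (algebraMap_smul R a x)).trans
            ((baseChangeTensorEquiv A R M P).map_smul a x) }
    e.toModuleIso) fun {P Q} g => by
      let := Module.compHom P (algebraMap A R)
      have : IsScalarTower A R P := .of_compHom A R P
      let := Module.compHom Q (algebraMap A R)
      have : IsScalarTower A R Q := .of_compHom A R Q
      ext x
      exact baseChangeTensorEquiv_lTensor g.hom x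

/-- The restriction of scalars of an `R`-module carrying a compatible `A`-module structure. -/
noncomputable def restrictScalarsObjOfIso (N : Type u) [AddCommGroup N] [Module A N] [Module R N]
    [IsScalarTower A R N] :
    (ModuleCat.restrictScalars (algebraMap A R)).obj (ModuleCat.of R N) ≅ ModuleCat.of A N :=
  let e : (ModuleCat.restrictScalars (algebraMap A R)).obj (ModuleCat.of R N) ≃ₗ[A] N :=
    { AddEquiv.refl N with map_smul' a (x : N) := algebraMap_smul R a x }
  e.toModuleIso

/-- If `R` is projective over `A`, then `Tor` over `R` of `R ⊗[A] M` is `Tor` over `A` of `M`. -/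
noncomputable def torBaseChangeIso [Module.Projective A R] (M : Type u) [AddCommGroup M]
    [Module A M] (N : ModuleCat.{u} R) (h : ℕ) :
    (ModuleCat.restrictScalars (algebraMap A R)).obj
        (((Tor (ModuleCat.{u} R) h).obj (ModuleCat.of R (R ⊗[A] M))).obj N) ≅
      ((Tor (ModuleCat.{u} A) h).obj (ModuleCat.of A M)).obj
        ((ModuleCat.restrictScalars (algebraMap A R)).obj N) :=
  leftDerivedObjIsoOfCompIso _ _ _ _ (tensoringLeftBaseChangeIso M) N h

end RestrictScalars

section Dimension

variable {K A R : Type} [Field K] [CommRing A] [CommRing R] [Algebra K A] [Algebra K R]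

theorem kdim_eq_of_iso {M N : ModuleCat R} (e : M ≅ N) : kdim K R M = kdim K R N := by
  let := Module.compHom M (algebraMap K R)
  let := Module.compHom N (algebraMap K R)
  have : IsScalarTower K R M := .of_compHom K R M
  have : IsScalarTower K R N := .of_compHom K R N
  exact (e.toLinearEquiv.restrictScalars K).rank_eq

variable [Algebra A R] [IsScalarTower K A R]

theorem kdim_restrictScalars (M : ModuleCat R) :
    kdim K A ((ModuleCat.restrictScalars (algebraMap A R)).obj M) = kdim K R M := by
  unfold kdim
  congr 1
  refine Module.ext' _ _ fun c x => ?_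
  change algebraMap A R (algebraMap K A c) • x = algebraMap K R c • x
  rw [IsScalarTower.algebraMap_apply K A R]

theorem kdim_tor_quotient_map [Module.Projective A R] (J : Ideal A) (N : Type) [AddCommGroup N]
    [Module A N] [Module R N] [IsScalarTower A R N] (h : ℕ) :
    kdim K R (((Tor (ModuleCat R) h).obj (ModuleCat.of R (R ⧸ J.map (algebraMap A R)))).obj
        (ModuleCat.of R N)) =
      kdim K A (((Tor (ModuleCat A) h).obj (ModuleCat.of A (A ⧸ J))).obj (ModuleCat.of A N)) := by
  let quotient_iso : ModuleCat.of R (R ⧸ J.map (algebraMap A R)) ≅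
      ModuleCat.of R (TensorProduct A R (A ⧸ J)) :=
    (Algebra.TensorProduct.quotIdealMapEquivTensorQuot R J).toLinearEquiv.toModuleIso
  rw [kdim_eq_of_iso (((Tor (ModuleCat R) h).mapIso quotient_iso).app _),
    ← kdim_restrictScalars (A := A)]
  exact kdim_eq_of_iso (torBaseChangeIso (A ⧸ J) _ h ≪≫
    ((Tor (ModuleCat A) h).obj (ModuleCat.of A (A ⧸ J))).mapIso (restrictScalarsObjOfIso N))

end Dimension

section ResidueField

variable {K σ τ : Type*} [CommRing K]

theorem mem_idealOfVars_iff {p : MvPolynomial σ K} :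
    p ∈ idealOfVars σ K ↔ constantCoeff p = 0 := by
  simpa [constantCoeff_eq, Finsupp.degree_eq_zero_iff] using mem_pow_idealOfVars_iff' 1 p

variable [Algebra (MvPolynomial τ K) (MvPolynomial σ K)]
  [IsScalarTower K (MvPolynomial τ K) (MvPolynomial σ K)]

theorem constantCoeff_algebraMap
    (h : ∀ j, constantCoeff (algebraMap (MvPolynomial τ K) (MvPolynomial σ K) (X j)) = 0)
    (p : MvPolynomial τ K) :
    constantCoeff (algebraMap (MvPolynomial τ K) (MvPolynomial σ K) p) = constantCoeff p := by
  have algebraMap_C (r : K) : algebraMap (MvPolynomial τ K) (MvPolynomial σ K) (C r) = C r :=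
    (IsScalarTower.algebraMap_apply K (MvPolynomial τ K) (MvPolynomial σ K) r).symm
  have comp_eq : (constantCoeff (R := K)).comp
      (algebraMap (MvPolynomial τ K) (MvPolynomial σ K)) = constantCoeff :=
    ringHom_ext (by simp [algebraMap_C]) (by simp [h])
  exact RingHom.congr_fun comp_eq p

/-- The residue fields `K[τ]/(τ)` and `K[σ]/(σ)` are isomorphic over `K[τ]` when the variables of
`K[τ]` act on `K[σ]` as polynomials without constant term. -/
noncomputable def quotientIdealOfVarsEquiv
    (h : ∀ j, constantCoeff (algebraMap (MvPolynomial τ K) (MvPolynomial σ K) (X j)) = 0) :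
    (MvPolynomial τ K ⧸ idealOfVars τ K) ≃ₗ[MvPolynomial τ K]
      MvPolynomial σ K ⧸ idealOfVars σ K :=
  let g := Algebra.linearMap (MvPolynomial τ K) (MvPolynomial σ K ⧸ idealOfVars σ K)
  have ker_eq : LinearMap.ker g = idealOfVars τ K := by
    ext p
    rw [mem_idealOfVars_iff, ← constantCoeff_algebraMap h, ← mem_idealOfVars_iff]
    exact Ideal.Quotient.eq_zero_iff_mem
  have surjective : Function.Surjective g := by
    refine Ideal.Quotient.mk_surjective.forall.2 fun r =>
      ⟨C (constantCoeff r), Ideal.Quotient.eq.2 ?_⟩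
    rw [mem_idealOfVars_iff, map_sub, constantCoeff_algebraMap h, constantCoeff_C, sub_self]
  (Submodule.quotEquivOfEq _ _ ker_eq).symm ≪≫ₗ g.quotKerEquivOfSurjective surjective

end ResidueField

open RingTheory.Sequence in
theorem torBetti_map_aeval {K : Type} [Field K] {m n : ℕ} {f : Fin n → MvPolynomial (Fin m) K}
    {d : Fin n → ℕ} (hd : ∀ j, 0 < d j) (hom : ∀ j, (f j).IsHomogeneous (d j))
    (regular : IsWeaklyRegular (MvPolynomial (Fin m) K) (List.ofFn f))
    (J : Ideal (MvPolynomial (Fin n) K)) (h : ℕ) :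
    torBetti K m (J.map (aeval f)) h = torBetti K n J h := by
  let := (aeval (R := K) f).toRingHom.toAlgebra
  have : IsScalarTower K (MvPolynomial (Fin n) K) (MvPolynomial (Fin m) K) :=
    .of_algHom (aeval f)
  have algebraMap_X (j : Fin n) :
      algebraMap (MvPolynomial (Fin n) K) (MvPolynomial (Fin m) K) (X j) = f j := aeval_X f j
  have : Module.Free (MvPolynomial (Fin n) K) (MvPolynomial (Fin m) K) :=
    free_of_isWeaklyRegular hd hom regular algebraMap_X
  have constantCoeff_eq_zero (j : Fin n) : constantCoeff
      (algebraMap (MvPolynomial (Fin n) K) (MvPolynomial (Fin m) K) (X j)) = 0 := by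
    rw [algebraMap_X, constantCoeff_eq]
    exact (hom j).coeff_eq_zero (by simpa using (hd j).ne)
  exact (kdim_tor_quotient_map J _ h).trans <| kdim_eq_of_iso <|
    ((Tor (ModuleCat (MvPolynomial (Fin n) K)) h).obj _).mapIso
      (quotientIdealOfVarsEquiv constantCoeff_eq_zero).toModuleIso.symm

theorem torBetti_map_aeval_prod {K : Type} [Field K] {m n : ℕ} {ℓ : Fin n → ℕ}
    (hℓ : ∀ j, 0 < ℓ j) {L : (j : Fin n) → Fin (ℓ j) → MvPolynomial (Fin m) K}
    (hLhom : ∀ j i, (L j i).IsHomogeneous 1)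
    (hα : ∀ c : (j : Fin n) → Fin (ℓ j), LinearIndependent K (fun j => L j (c j)))
    (J : Ideal (MvPolynomial (Fin n) K)) (h : ℕ) :
    torBetti K m (J.map (aeval fun j => ∏ i, L j i)) h = torBetti K n J h := by
  have (j : Fin n) : Nonempty (Fin (ℓ j)) := ⟨0, hℓ j⟩
  refine torBetti_map_aeval hℓ (fun j => ?_) (isWeaklyRegular_ofFn_prod fun c =>
    isWeaklyRegular_ofFn_of_linearIndependent (fun j => hLhom j (c j)) (hα c)) J h
  simpa using IsHomogeneous.prod Finset.univ (L j) (fun _ => 1) fun i _ => hLhom j i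

theorem map_aeval_span_mul_X {K R ι : Type*} [CommRing K] [CommRing R] [Algebra K R] [LT ι]
    (f : ι → R) :
    (Ideal.span {g : MvPolynomial ι K | ∃ i j : ι, i < j ∧ g = X i * X j}).map (aeval f) =
      Ideal.span {g | ∃ i j : ι, i < j ∧ g = f i * f j} := by
  rw [Ideal.map_span]
  congr 1
  ext g
  constructor
  · rintro ⟨_, ⟨i, j, hij, rfl⟩, rfl⟩
    exact ⟨i, j, hij, by simp⟩
  · rintro ⟨i, j, hij, rfl⟩
    exact ⟨X i * X j, ⟨i, j, hij, rfl⟩, by simp⟩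

theorem betti_numbers_grid_eq_betti_numbers_omega_general {K : Type} [Field K] {m n : ℕ}
    {ℓ : Fin n → ℕ} (hℓ : ∀ j, 0 < ℓ j) {L : (j : Fin n) → Fin (ℓ j) → MvPolynomial (Fin m) K}
    (hLhom : ∀ j i, (L j i).IsHomogeneous 1)
    (hα : ∀ c : (j : Fin n) → Fin (ℓ j), LinearIndependent K (fun j => L j (c j)))
    {f : Fin n → MvPolynomial (Fin m) K} (hf : ∀ j, f j = ∏ i : Fin (ℓ j), L j i) (h : ℕ) :
    torBetti K m (Ideal.span {g | ∃ i j : Fin n, i < j ∧ g = f i * f j}) h =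
      torBetti K n (Ideal.span {g | ∃ i j : Fin n, i < j ∧ g = X i ^ ℓ i * X j ^ ℓ j}) h := by
  have grid_eq := torBetti_map_aeval_prod hℓ hLhom hα
    (Ideal.span {g | ∃ i j, i < j ∧ g = X i * X j}) h
  have omega_eq := torBetti_map_aeval_prod hℓ (fun j _ => isHomogeneous_X K j)
    (fun _ => linearIndependent_X (Fin n) K) (Ideal.span {g | ∃ i j, i < j ∧ g = X i * X j}) h
  rw [← funext hf, map_aeval_span_mul_X] at grid_eq
  simp only [Fin.prod_const, map_aeval_span_mul_X] at omega_eq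
  exact grid_eq.trans omega_eq.symm

/-- For linear forms `L j i` in `R = K[x_0,…,x_n]` satisfying condition
(α), with `f j = ∏ i, L j i`, `I = (f_i f_j : i < j) ⊆ R` and
`Ω = (x_i^{ℓ_i} x_j^{ℓ_j} : i < j) ⊆ S = K[x_1,…,x_n]`, one has
`dim_K Tor_h^R(R/I, R/𝔪_R) = dim_K Tor_h^S(S/Ω, S/𝔪_S)` for every `h ≥ 0`: the Betti
numbers of a complete grid or pseudo-grid coincide with those of `Ω`. -/
theorem betti_numbers_grid_eq_betti_numbers_omega
    (K : Type) [Field K] [Infinite K] (n : ℕ) (hn : 2 ≤ n)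
    (ℓ : Fin n → ℕ) (hℓ : ∀ j, 0 < ℓ j)
    (L : (j : Fin n) → Fin (ℓ j) → MvPolynomial (Fin (n + 1)) K)
    (hLhom : ∀ j i, (L j i).IsHomogeneous 1)
    (hα : ∀ c : (j : Fin n) → Fin (ℓ j), LinearIndependent K (fun j => L j (c j)))
    (f : Fin n → MvPolynomial (Fin (n + 1)) K)
    (hf : ∀ j, f j = ∏ i : Fin (ℓ j), L j i) :
    ∀ h : ℕ,
      torBetti K (n + 1)
          (Ideal.span {g : MvPolynomial (Fin (n + 1)) K |
            ∃ i j : Fin n, i < j ∧ g = f i * f j}) h =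
        torBetti K n
          (Ideal.span {g : MvPolynomial (Fin n) K |
            ∃ i j : Fin n, i < j ∧ g = X i ^ ℓ i * X j ^ ℓ j}) h :=
  betti_numbers_grid_eq_betti_numbers_omega_general hℓ hLhom hα hf
end

section
/- Let L_{j,i} ∈ R = K[x_0, x_1, …, x_n] (1 ≤ j ≤ n, 1 ≤ i ≤ ℓ_j, n ≥ 2) be linear forms satisfying condition (α), set f_j = ∏_{i=1}^{ℓ_j} L_{j,i} and I = (f_i f_j : 1 ≤ i < j ≤ n). Then the ideal I has height n−1 and the quotient ring R/I has Krull dimension 2 (so a complete grid or pseudo-grid of lines is a curve in ℙ^n). -/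
open MvPolynomial

/-- The height of an ideal `N` of a commutative ring: the infimum of the heights of the
prime ideals containing `N`. -/
noncomputable def idealHeight {T : Type} [CommRing T] (N : Ideal T) : ℕ∞ :=
  ⨅ (p : PrimeSpectrum T) (_ : N ≤ p.asIdeal), Order.height p

/-!
A prime ideal contains all products `f i * f j` with `i ≠ j` if and only if it contains all the
`f j` except possibly one, hence, for products of linear forms, one factor of each remaining `f j`.
So the zero locus of the grid ideal is a union of zero loci of ideals generated by `n - 1` linearly
independent linear forms. A linear automorphism of the polynomial ring carries such an ideal to one
generated by variables, whose height and coheight are visible. The height of the grid ideal is the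
infimum of the heights of these components, and the dimension of its quotient is the supremum of
their dimensions.
-/

open PrimeSpectrum

section ZeroLocus

lemma krullDim_iUnion_of_isUpperSet {α ι : Type*} [Preorder α] {s : ι → Set α}
    (hs : ∀ i, IsUpperSet (s i)) :
    Order.krullDim (⋃ i, s i : Set α) = ⨆ i, Order.krullDim (s i) := by
  refine le_antisymm (iSup_le fun c => ?_) (iSup_le fun i => ?_)
  · obtain ⟨i, hi⟩ := Set.mem_iUnion.mp c.head.2
    let c' : LTSeries (s i) :=
      { length := c.length
        toFun := fun k => ⟨c k, hs i (LTSeries.head_le c k) hi⟩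
        step := c.step }
    exact (Order.LTSeries.length_le_krullDim c').trans (le_iSup (fun i => Order.krullDim (s i)) i)
  · exact Order.krullDim_le_of_strictMono (Set.inclusion (Set.subset_iUnion s i)) fun _ _ h => h

variable {R ι : Type*} [CommRing R] {I : Ideal R} {q : ι → Ideal R}

lemma ringKrullDim_quotient_of_zeroLocus_eq_iUnion
    (h : zeroLocus (I : Set R) = ⋃ i, zeroLocus (q i : Set R)) :
    ringKrullDim (R ⧸ I) = ⨆ i, ringKrullDim (R ⧸ q i) := by
  simp_rw [ringKrullDim_quotient]
  rw [h, krullDim_iUnion_of_isUpperSet]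
  exact fun i _ _ hle hx => Set.Subset.trans hx hle

lemma height_eq_iInf_zeroLocus (I : Ideal R) :
    I.height = ⨅ p ∈ zeroLocus (I : Set R), p.asIdeal.height := by
  refine le_antisymm (le_iInf₂ fun _ hp => Ideal.height_mono hp) ?_
  rw [Ideal.height_eq_inf_minimalPrimes]
  exact le_iInf₂ fun p hp => iInf₂_le (⟨p, hp.1.1⟩ : PrimeSpectrum R) hp.1.2

lemma height_of_zeroLocus_eq_iUnion
    (h : zeroLocus (I : Set R) = ⋃ i, zeroLocus (q i : Set R)) :
    I.height = ⨅ i, (q i).height := by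
  rw [height_eq_iInf_zeroLocus, h, iInf_iUnion]
  simp_rw [← height_eq_iInf_zeroLocus]

lemma idealHeight_eq_height {T : Type} [CommRing T] (N : Ideal T) : idealHeight N = N.height := by
  simp_rw [idealHeight, ← PrimeSpectrum.height_eq_orderHeight]
  exact (height_eq_iInf_zeroLocus N).symm

end ZeroLocus

section Variables

variable {R σ τ : Type*} [CommRing R]

lemma ker_killCompl {g : τ → σ} (hg : Function.Injective g) :
    RingHom.ker (killCompl (R := R) hg) = Ideal.span (X '' (Set.range g)ᶜ) := by
  apply le_antisymm
  · intro p hp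
    have rename_killCompl_modEq :
        (Ideal.Quotient.mkₐ R (Ideal.span (X '' (Set.range g)ᶜ))).comp
          ((rename g).comp (killCompl hg)) = Ideal.Quotient.mkₐ R _ := by
      ext1 i
      by_cases hi : i ∈ Set.range g
      · obtain ⟨j, rfl⟩ := hi
        simp [← rename_X]
      · simpa [killCompl, hi] using (Ideal.Quotient.eq_zero_iff_mem.mpr
          (Ideal.subset_span (Set.mem_image_of_mem X hi))).symm
    rw [← Ideal.Quotient.eq_zero_iff_mem, ← Ideal.Quotient.mkₐ_eq_mk R, ← rename_killCompl_modEq]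
    simp [(RingHom.mem_ker).mp hp]
  · rw [Ideal.span_le]
    rintro _ ⟨i, hi, rfl⟩
    rw [SetLike.mem_coe, RingHom.mem_ker, killCompl, aeval_X, dif_neg hi]

lemma killCompl_surjective {g : τ → σ} (hg : Function.Injective g) :
    Function.Surjective (killCompl (R := R) hg) :=
  fun p => ⟨rename g p, killCompl_rename_app hg p⟩

lemma span_X_image_eq_ker_killCompl (s : Set σ) :
    Ideal.span (X '' s : Set (MvPolynomial σ R)) =
      RingHom.ker (killCompl (R := R) (Subtype.val_injective (p := (· ∈ sᶜ)))) := by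
  rw [ker_killCompl, Subtype.range_val_subtype, Set.ofPred_mem_eq, compl_compl]

lemma isPrime_span_X_image [IsDomain R] (s : Set σ) :
    (Ideal.span (X '' s : Set (MvPolynomial σ R))).IsPrime :=
  span_X_image_eq_ker_killCompl (R := R) s ▸ RingHom.ker_isPrime _

lemma X_mem_span_X_image_iff [Nontrivial R] {s : Set σ} {i : σ} :
    (X i : MvPolynomial σ R) ∈ Ideal.span (X '' s) ↔ i ∈ s := by
  classical
  simp [mem_ideal_span_X_image, support_X, Finsupp.single_apply]

lemma ringKrullDim_quotient_span_X_image [IsNoetherianRing R] [Finite σ] (s : Set σ) :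
    ringKrullDim (MvPolynomial σ R ⧸ Ideal.span (X '' s : Set (MvPolynomial σ R))) =
      ringKrullDim R + sᶜ.ncard := by
  rw [span_X_image_eq_ker_killCompl, ringKrullDim_eq_of_ringEquiv
    (Ideal.quotientKerAlgEquivOfSurjective (killCompl_surjective _)).toRingEquiv,
    MvPolynomial.ringKrullDim_of_isNoetherianRing]
  rfl

lemma encard_le_height_span_X_image [IsDomain R] {s : Set σ} (hs : s.Finite) :
    s.encard ≤ (Ideal.span (X '' s : Set (MvPolynomial σ R))).height := by
  induction s, hs using Set.Finite.induction_on with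
  | empty => simp
  | @insert a s ha _ ih =>
    have := isPrime_span_X_image (R := R) s
    have := isPrime_span_X_image (R := R) (insert a s)
    have span_lt : Ideal.span (X '' s) < Ideal.span (X '' insert a s : Set (MvPolynomial σ R)) :=
      SetLike.lt_iff_le_and_exists.mpr ⟨Ideal.span_mono (Set.image_mono (Set.subset_insert a s)),
        X a, X_mem_span_X_image_iff.mpr (Set.mem_insert a s), X_mem_span_X_image_iff.not.mpr ha⟩
    rw [Set.encard_insert_of_notMem ha]
    exact (add_le_add_left ih 1).trans (Ideal.height_add_one_le_of_lt_of_isPrime span_lt)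

lemma height_span_X_image [IsDomain R] [IsNoetherianRing R] [Finite σ] (s : Set σ) :
    (Ideal.span (X '' s : Set (MvPolynomial σ R))).height = s.encard := by
  refine le_antisymm ?_ (encard_le_height_span_X_image s.toFinite)
  have := isPrime_span_X_image (R := R) s
  have krull := Ideal.height_le_card_of_mem_minimalPrimes_span
    (p := Ideal.span (X '' s : Set (MvPolynomial σ R))) (s.toFinite.image X)
    (by simp [Ideal.minimalPrimes_eq_subsingleton_self])
  rwa [Set.ncard_image_of_injective s X_injective, s.toFinite.cast_ncard_eq] at krull

end Variables

section LinearForms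

/-- The variables as a basis of the module of linear forms, which is the degree one part of the
polynomial ring. -/
noncomputable def linearFormBasis (σ R : Type*) [CommSemiring R] :
    Module.Basis σ R (homogeneousSubmodule σ R 1) :=
  (Module.Basis.span (linearIndependent_X σ R)).map
    (LinearEquiv.ofEq _ _ homogeneousSubmodule_one_eq_span_X.symm)

lemma coe_linearFormBasis {σ R : Type*} [CommSemiring R] (i : σ) :
    (linearFormBasis σ R i : MvPolynomial σ R) = X i := by
  simp [linearFormBasis, Module.Basis.span_apply]

lemma exists_algEquiv_X_eq_basis {R σ : Type*} [CommSemiring R]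
    (b : Module.Basis σ R (homogeneousSubmodule σ R 1)) :
    ∃ e : MvPolynomial σ R ≃ₐ[R] MvPolynomial σ R, ∀ i, e (X i) = b i := by
  let toPoly := SymmetricAlgebra.equivMvPolynomial (linearFormBasis σ R)
  have toPoly_ι : toPoly.toLinearMap ∘ₗ SymmetricAlgebra.ι R _ =
      (homogeneousSubmodule σ R 1).subtype :=
    (linearFormBasis σ R).ext fun i => by simp [toPoly, coe_linearFormBasis]
  refine ⟨(SymmetricAlgebra.equivMvPolynomial b).symm.trans toPoly, fun i => ?_⟩
  simpa using LinearMap.congr_fun toPoly_ι (b i)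

variable {K σ τ : Type*} [Field K] {v : τ → MvPolynomial σ K}

lemma exists_algEquiv_X_eq_of_linearIndependent (hv : ∀ t, (v t).IsHomogeneous 1)
    (hli : LinearIndependent K v) :
    ∃ (g : τ ↪ σ) (e : MvPolynomial σ K ≃ₐ[K] MvPolynomial σ K), ∀ t, e (X (g t)) = v t := by
  let w : τ → homogeneousSubmodule σ K 1 := fun t => ⟨v t, hv t⟩
  have hw : LinearIndependent K w := .of_comp (homogeneousSubmodule σ K 1).subtype hli
  let b := Module.Basis.extend hw.linearIndepOn_id
  let toIndex (t : τ) : hw.linearIndepOn_id.extend (Set.subset_univ _) :=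
    ⟨w t, hw.linearIndepOn_id.subset_extend _ (Set.mem_range_self t)⟩
  have toIndex_injective : Function.Injective toIndex :=
    fun _ _ h => hw.injective (congrArg Subtype.val h)
  let u := b.indexEquiv (linearFormBasis σ K)
  obtain ⟨e, he⟩ := exists_algEquiv_X_eq_basis (b.reindex u)
  refine ⟨⟨u ∘ toIndex, u.injective.comp toIndex_injective⟩, e, fun t => ?_⟩
  simp [he, b, w, toIndex]

lemma exists_algEquiv_map_span_X_image (hv : ∀ t, (v t).IsHomogeneous 1)
    (hli : LinearIndependent K v) :
    ∃ (g : τ ↪ σ) (e : MvPolynomial σ K ≃+* MvPolynomial σ K),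
      Ideal.span (Set.range v) = (Ideal.span (X '' Set.range g)).map e := by
  obtain ⟨g, e, he⟩ := exists_algEquiv_X_eq_of_linearIndependent hv hli
  refine ⟨g, e.toRingEquiv, ?_⟩
  rw [Ideal.map_span, ← Set.range_comp, ← Set.range_comp]
  congr 2
  exact funext fun t => (he t).symm

variable [Finite σ]

lemma height_span_range_of_linearIndependent (hv : ∀ t, (v t).IsHomogeneous 1)
    (hli : LinearIndependent K v) :
    (Ideal.span (Set.range v)).height = ENat.card τ := by
  obtain ⟨g, e, hmap⟩ := exists_algEquiv_map_span_X_image hv hli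
  rw [hmap, RingEquiv.height_map, height_span_X_image, ← Set.image_univ, g.injective.encard_image,
    Set.encard_univ]

lemma ringKrullDim_quotient_span_range_of_linearIndependent (hv : ∀ t, (v t).IsHomogeneous 1)
    (hli : LinearIndependent K v) :
    ringKrullDim (MvPolynomial σ K ⧸ Ideal.span (Set.range v)) =
      (Nat.card σ - Nat.card τ : ℕ) := by
  obtain ⟨g, e, hmap⟩ := exists_algEquiv_map_span_X_image hv hli
  rw [← ringKrullDim_eq_of_ringEquiv (Ideal.quotientEquiv _ _ e hmap),
    ringKrullDim_quotient_span_X_image, ringKrullDim_eq_zero_of_field, zero_add,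
    Set.ncard_compl, Set.ncard_range_of_injective g.injective]

end LinearForms

section Grid

variable {R ι : Type*} [CommSemiring R] [LinearOrder ι]

/-- The ideal generated by the products of two members of a family with distinct indices. When each
`f j` is a product of linear forms as in condition (α), it defines a complete grid or pseudo-grid
of lines. -/
def gridIdeal (f : ι → R) : Ideal R :=
  Ideal.span {g : R | ∃ i j : ι, i < j ∧ g = f i * f j}

lemma gridIdeal_le_iff [Nonempty ι] {f : ι → R} {p : Ideal R} (hp : p.IsPrime) :
    gridIdeal f ≤ p ↔ ∃ j₀, ∀ j ≠ j₀, f j ∈ p := by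
  rw [gridIdeal, Ideal.span_le]
  constructor
  · intro h
    by_cases hf : ∃ j₀, f j₀ ∉ p
    · obtain ⟨j₀, hj₀⟩ := hf
      refine ⟨j₀, fun j hj => ?_⟩
      rcases hj.lt_or_gt with hlt | hlt
      · exact (hp.mem_or_mem (h ⟨j, j₀, hlt, rfl⟩)).resolve_right hj₀
      · exact (hp.mem_or_mem (h ⟨j₀, j, hlt, rfl⟩)).resolve_left hj₀
    · push Not at hf
      exact ⟨Classical.arbitrary ι, fun j _ => hf j⟩
  · rintro ⟨j₀, hj₀⟩ _ ⟨i, j, hij, rfl⟩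
    by_cases hi : i = j₀
    · exact p.mul_mem_left _ (hj₀ j (hi ▸ hij.ne'))
    · exact p.mul_mem_right _ (hj₀ i hi)

/-- The ideal generated by the members of a family other than `v j₀`. For a choice `v` of one factor
from each of the products defining the grid, it defines one component (a line) of the grid. -/
def gridComponentIdeal (v : ι → R) (j₀ : ι) : Ideal R :=
  Ideal.span (Set.range fun j : {j // j ≠ j₀} => v j)

lemma zeroLocus_gridIdeal [Nonempty ι] {κ : ι → Type*} [∀ j, Fintype (κ j)]
    [∀ j, Nonempty (κ j)] (L : (j : ι) → κ j → R) :
    zeroLocus (gridIdeal fun j => ∏ i, L j i : Set R) =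
      ⋃ x : ((j : ι) → κ j) × ι,
        zeroLocus (gridComponentIdeal (fun j => L j (x.1 j)) x.2 : Set R) := by
  ext p
  have exists_choice (j₀ : ι) : (∀ j ≠ j₀, ∃ i, L j i ∈ p.asIdeal) ↔
      ∃ c : (j : ι) → κ j, ∀ j ≠ j₀, L j (c j) ∈ p.asIdeal := by
    rw [← Classical.skolem (p := fun j i => j ≠ j₀ → L j i ∈ p.asIdeal)]
    exact forall_congr' fun j => by by_cases hj : j = j₀ <;> simp [hj]
  have component_le (v : ι → R) (j₀ : ι) :
      gridComponentIdeal v j₀ ≤ p.asIdeal ↔ ∀ j ≠ j₀, v j ∈ p.asIdeal := by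
    simp [gridComponentIdeal, Ideal.span_le, Set.range_subset_iff]
  simp only [Set.mem_iUnion, mem_zeroLocus, SetLike.coe_subset_coe, gridIdeal_le_iff p.isPrime,
    p.isPrime.prod_mem_iff, Finset.mem_univ, true_and, exists_choice, component_le, Prod.exists]
  exact exists_comm

end Grid

section LinearGrid

lemma natCard_ne {ι : Type*} [Finite ι] (j₀ : ι) : Nat.card {j // j ≠ j₀} = Nat.card ι - 1 := by
  rw [← Set.ncard_singleton j₀, ← Set.ncard_compl]
  rfl

variable {K σ ι : Type*} [Field K] [Finite σ] [Finite ι] {v : ι → MvPolynomial σ K}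

lemma height_gridComponentIdeal (hv : ∀ j, (v j).IsHomogeneous 1) (hli : LinearIndependent K v)
    (j₀ : ι) :
    (gridComponentIdeal v j₀).height = (Nat.card ι - 1 : ℕ) := by
  have hli_ne := hli.comp ((↑) : {j // j ≠ j₀} → ι) Subtype.val_injective
  calc (gridComponentIdeal v j₀).height
      = ENat.card {j // j ≠ j₀} := height_span_range_of_linearIndependent (fun j => hv j) hli_ne
    _ = (Nat.card ι - 1 : ℕ) := by rw [ENat.card_eq_coe_natCard, natCard_ne]

lemma ringKrullDim_quotient_gridComponentIdeal (hv : ∀ j, (v j).IsHomogeneous 1)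
    (hli : LinearIndependent K v) (j₀ : ι) :
    ringKrullDim (MvPolynomial σ K ⧸ gridComponentIdeal v j₀) =
      (Nat.card σ + 1 - Nat.card ι : ℕ) := by
  have hli_ne := hli.comp ((↑) : {j // j ≠ j₀} → ι) Subtype.val_injective
  have : Nonempty ι := ⟨j₀⟩
  have card_pos : 0 < Nat.card ι := Nat.card_pos
  calc ringKrullDim (MvPolynomial σ K ⧸ gridComponentIdeal v j₀)
      = (Nat.card σ - Nat.card {j // j ≠ j₀} : ℕ) :=
        ringKrullDim_quotient_span_range_of_linearIndependent (fun j => hv j) hli_ne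
    _ = (Nat.card σ + 1 - Nat.card ι : ℕ) := by rw [natCard_ne]; congr 1; omega

end LinearGrid

theorem grid_ideal_height_and_dimension_general {K σ ι : Type*} {κ : ι → Type*} [Field K]
    [Finite σ] [LinearOrder ι] [Finite ι] [Nonempty ι] [∀ j, Fintype (κ j)] [∀ j, Nonempty (κ j)]
    (L : (j : ι) → κ j → MvPolynomial σ K) (hLhom : ∀ j i, (L j i).IsHomogeneous 1)
    (hα : ∀ c : (j : ι) → κ j, LinearIndependent K fun j => L j (c j)) :
    (gridIdeal fun j => ∏ i, L j i).height = (Nat.card ι - 1 : ℕ) ∧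
      ringKrullDim (MvPolynomial σ K ⧸ gridIdeal fun j => ∏ i, L j i) =
        (Nat.card σ + 1 - Nat.card ι : ℕ) := by
  have component_height (x : ((j : ι) → κ j) × ι) :=
    height_gridComponentIdeal (fun j => hLhom j (x.1 j)) (hα x.1) x.2
  have component_dim (x : ((j : ι) → κ j) × ι) :=
    ringKrullDim_quotient_gridComponentIdeal (fun j => hLhom j (x.1 j)) (hα x.1) x.2
  rw [height_of_zeroLocus_eq_iUnion (zeroLocus_gridIdeal L),
    ringKrullDim_quotient_of_zeroLocus_eq_iUnion (zeroLocus_gridIdeal L)]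
  simp only [component_height, component_dim, ciInf_const, ciSup_const, and_self]

/-- For linear forms `L j i` in `R = K[x_0,…,x_n]` satisfying condition
(α), with `f j = ∏ i, L j i` and `I = (f_i f_j : i < j)` the defining ideal of a complete
grid or pseudo-grid of lines, the ideal `I` has height `n-1` and `R/I` has Krull
dimension `2`. -/
theorem grid_ideal_height_and_dimension
    (K : Type) [Field K] [Infinite K] (n : ℕ) (hn : 2 ≤ n)
    (ℓ : Fin n → ℕ) (hℓ : ∀ j, 0 < ℓ j)
    (L : (j : Fin n) → Fin (ℓ j) → MvPolynomial (Fin (n + 1)) K)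
    (hLhom : ∀ j i, (L j i).IsHomogeneous 1)
    (hα : ∀ c : (j : Fin n) → Fin (ℓ j), LinearIndependent K (fun j => L j (c j)))
    (f : Fin n → MvPolynomial (Fin (n + 1)) K)
    (hf : ∀ j, f j = ∏ i : Fin (ℓ j), L j i) :
    idealHeight
        (Ideal.span {g : MvPolynomial (Fin (n + 1)) K | ∃ i j : Fin n, i < j ∧ g = f i * f j}) =
      ((n - 1 : ℕ) : ℕ∞) ∧
    ringKrullDim
        (MvPolynomial (Fin (n + 1)) K ⧸
          Ideal.span {g : MvPolynomial (Fin (n + 1)) K | ∃ i j : Fin n, i < j ∧ g = f i * f j}) =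
      2 := by
  obtain rfl : f = fun j => ∏ i, L j i := funext hf
  have : Nonempty (Fin n) := ⟨⟨0, by omega⟩⟩
  have (j : Fin n) : Nonempty (Fin (ℓ j)) := ⟨⟨0, hℓ j⟩⟩
  have dim_eq : n + 1 + 1 - n = 2 := by omega
  have h := grid_ideal_height_and_dimension_general L hLhom hα
  rw [Nat.card_fin, Nat.card_fin, dim_eq, Nat.cast_ofNat] at h
  rw [idealHeight_eq_height]
  exact h
end
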